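/- There is no projective plane of order 6, i.e., no finite projective plane in which every line contains exactly 7 points. -/

import Mathlib

/-!
The proof is the Bruck–Ryser argument for order 6. A plane of order 6 has 43 points and 43 lines.
Attach a rational variable `x_p` to each point, let `L_l` be the sum of the variables on the line
`l`, and let `w` be the sum of all variables. Counting the lines through pairs of points gives
`∑ L_l² = 6 ∑ x_p² + w²` (`sum_lineForm_sq`).

Since `43 + 1` is divisible by 4 and `6 = 1² + 1² + 2² + 0²`, one extra variable `x₀` makes
`6 (∑ x_p² + x₀²)` a sum of 44 squares `∑ y_i²` of independent linear forms, by Euler's four-square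
identity on blocks of four (`sum_eulerForm_sq`). Imposing the 43 conditions `L_l = ± y_l`, with
signs chosen so that the remaining form `y₀` still determines the vector
(`exists_submodule_sq_eq`), leaves a vector with `y₀ ≠ 0` and `y₀² + w² = 6 x₀²`. This is
impossible over `ℚ`, because 3 divides `6 c²` to an odd power
(`eq_zero_of_sq_add_sq_eq_six_mul_sq`).
-/

/-- Fermat descent at the prime 3, by induction on a bound for `|c|`. -/
lemma int_eq_zero_of_sq_add_sq_eq_six_mul_sq (n : ℕ) :
    ∀ a b c : ℤ, c.natAbs ≤ n → a ^ 2 + b ^ 2 = 6 * c ^ 2 → a = 0 := by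
  induction n with
  | zero =>
    intro a b c hc h
    have hc0 : c = 0 := by omega
    subst hc0
    nlinarith [sq_nonneg a, sq_nonneg b]
  | succ n ih =>
    intro a b c hc h
    by_cases hc0 : c = 0
    · exact ih a b c (by omega) h
    -- `-1` is not a square modulo 3, so 3 divides `a` and `b`, and then 3 divides `c`.
    have key : (a : ZMod 3) = 0 ∧ (b : ZMod 3) = 0 := by
      have h3 : (a : ZMod 3) ^ 2 + (b : ZMod 3) ^ 2 = 6 * (c : ZMod 3) ^ 2 := by
        exact_mod_cast congrArg (Int.cast : ℤ → ZMod 3) h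
      generalize (a : ZMod 3) = x at *
      generalize (b : ZMod 3) = y at *
      generalize (c : ZMod 3) = z at *
      revert x y z
      decide
    obtain ⟨a', rfl⟩ := (ZMod.intCast_zmod_eq_zero_iff_dvd a 3).1 key.1
    obtain ⟨b', rfl⟩ := (ZMod.intCast_zmod_eq_zero_iff_dvd b 3).1 key.2
    have hc3 : (3 : ℤ) ∣ c := by
      have h2 : (3 : ℤ) ∣ 2 * c ^ 2 := ⟨a' ^ 2 + b' ^ 2, by push_cast at h; linarith⟩
      have h4 : (3 : ℤ) ∣ c ^ 2 := by omega
      exact Int.prime_three.dvd_of_dvd_pow h4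
    obtain ⟨c', rfl⟩ := hc3
    have := ih a' b' c' (by omega) (by push_cast at h; linarith)
    simp [this]

lemma eq_zero_of_sq_add_sq_eq_six_mul_sq (a b c : ℚ) (h : a ^ 2 + b ^ 2 = 6 * c ^ 2) :
    a = 0 := by
  have hi := int_eq_zero_of_sq_add_sq_eq_six_mul_sq _
    (a.num * b.den * c.den) (b.num * a.den * c.den) (c.num * a.den * b.den) le_rfl (by
      have ha : (a.den : ℚ) ≠ 0 := by exact_mod_cast a.den_ne_zero
      have hb : (b.den : ℚ) ≠ 0 := by exact_mod_cast b.den_ne_zero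
      have hc : (c.den : ℚ) ≠ 0 := by exact_mod_cast c.den_ne_zero
      have ea : (a.num : ℚ) = a * a.den := (Rat.mul_den_eq_num a).symm
      have eb : (b.num : ℚ) = b * b.den := (Rat.mul_den_eq_num b).symm
      have ec : (c.num : ℚ) = c * c.den := (Rat.mul_den_eq_num c).symm
      have : ((a.num : ℚ) * b.den * c.den) ^ 2 + (b.num * a.den * c.den) ^ 2
          = 6 * (c.num * a.den * b.den) ^ 2 := by
        rw [ea, eb, ec]
        linear_combination ((a.den : ℚ) * b.den * c.den) ^ 2 * h
      exact_mod_cast this)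
  simpa using hi

/-- Given linear forms `y i` without common zero and arbitrary forms `L i`, one condition
`L i = ± y i` can be imposed for each `i ∈ S`, at the cost of one dimension each, so that the
forms `y i` with `i ∉ S` alone have no common zero on the resulting subspace. -/
lemma exists_submodule_sq_eq {V ι : Type*} [AddCommGroup V] [Module ℚ V] [FiniteDimensional ℚ V]
    [DecidableEq ι] (y L : ι → V →ₗ[ℚ] ℚ) (hy : ∀ v, (∀ i, y i v = 0) → v = 0) (S : Finset ι) :
    ∃ W : Submodule ℚ V, Module.finrank ℚ V ≤ Module.finrank ℚ W + S.card ∧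
      (∀ v ∈ W, ∀ i ∈ S, L i v ^ 2 = y i v ^ 2) ∧
      (∀ v ∈ W, (∀ i, i ∉ S → y i v = 0) → v = 0) := by
  induction S using Finset.induction_on with
  | empty =>
    refine ⟨⊤, by simp, by simp, ?_⟩
    intro v _ h
    exact hy v (fun i => h i (by simp))
  | insert a S ha ih =>
    obtain ⟨W, hW, hsq, hinj⟩ := ih
    -- On the zeros `u` of the surviving forms, `y a` is injective, so these form at most a line
    -- and `L a u = y a u`, `L a u = -y a u` cannot both have a nonzero solution there.
    have hsign : ∃ ε : ℚ, ε ^ 2 = 1 ∧ ∀ v ∈ W, L a v = ε * y a v →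
        (∀ i, i ∉ insert a S → y i v = 0) → v = 0 := by
      by_contra! hcon
      obtain ⟨u, huW, huL, hu, hu0⟩ := hcon 1 (by norm_num)
      obtain ⟨t, htW, htL, ht, ht0⟩ := hcon (-1) (by norm_num)
      have hcomb : y a t • u - y a u • t = 0 := by
        refine hinj _ (W.sub_mem (W.smul_mem _ huW) (W.smul_mem _ htW)) ?_
        intro i hi
        by_cases hia : i = a
        · subst hia
          simp [mul_comm]
        · have hi' : i ∉ insert a S := by simp [hia, hi]
          simp [hu i hi', ht i hi']
      have hL := congrArg (L a) hcomb
      simp only [map_sub, map_smul, smul_eq_mul, map_zero, huL, htL] at hL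
      have hprod : y a t * y a u = 0 := by linarith
      have hz : ∀ z ∈ W, (∀ i, i ∉ insert a S → y i z = 0) → y a z = 0 → z = 0 := by
        intro z hzW hz hza
        refine hinj z hzW fun i hi => ?_
        by_cases hia : i = a
        · rw [hia, hza]
        · exact hz i (by simp [hia, hi])
      rcases mul_eq_zero.1 hprod with h | h
      · exact ht0 (hz t htW ht h)
      · exact hu0 (hz u huW hu h)
    obtain ⟨ε, hε, hεinj⟩ := hsign
    refine ⟨W ⊓ LinearMap.ker (L a - ε • y a), ?_, ?_, ?_⟩
    · have h1 := Submodule.finrank_sup_add_finrank_inf_eq W (LinearMap.ker (L a - ε • y a))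
      have h2 := Submodule.finrank_le (W ⊔ LinearMap.ker (L a - ε • y a))
      have h3 := LinearMap.finrank_range_add_finrank_ker (L a - ε • y a)
      have h4 := Submodule.finrank_le (LinearMap.range (L a - ε • y a))
      rw [Module.finrank_self] at h4
      rw [Finset.card_insert_of_notMem ha]
      omega
    · intro v hv i hi
      obtain ⟨hvW, hvk⟩ := Submodule.mem_inf.1 hv
      rcases Finset.mem_insert.1 hi with rfl | hi
      · have : L i v = ε * y i v := by
          simpa [sub_eq_zero] using hvk
        rw [this, mul_pow, hε, one_mul]
      · exact hsq v hvW i hi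
    · intro v hv h
      obtain ⟨hvW, hvk⟩ := Submodule.mem_inf.1 hv
      exact hεinj v hvW (by simpa [sub_eq_zero] using hvk) h

/-- The matrix of Euler's four-square identity for `6 = 1² + 1² + 2² + 0²`: its columns are
orthogonal and have square length 6. -/
def eulerMatrix : Matrix (Fin 4) (Fin 4) ℚ :=
  !![1, 1, 2, 0; -1, 1, 0, 2; -2, 0, 1, -1; 0, -2, 1, 1]

/-- The linear forms obtained by applying `eulerMatrix` to each of 11 blocks of four coordinates;
`s = (b, j)` is the `j`-th form on block `b`. -/
def eulerForm (s : Fin 11 × Fin 4) : (Fin 11 × Fin 4 → ℚ) →ₗ[ℚ] ℚ :=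
  ∑ k, eulerMatrix s.2 k • LinearMap.proj (s.1, k)

lemma sum_eulerForm_sq (v : Fin 11 × Fin 4 → ℚ) :
    ∑ s, eulerForm s v ^ 2 = 6 * ∑ s, v s ^ 2 := by
  rw [Fintype.sum_prod_type, Fintype.sum_prod_type, Finset.mul_sum]
  refine Finset.sum_congr rfl fun b _ => ?_
  simp [eulerForm, eulerMatrix, Fin.sum_univ_four]
  ring

/-- Every point other than `p` lies on exactly one of the 7 lines through `p`, each of which has 6
further points. -/
lemma card_points_eq {Pt Ln : Type} (I : Pt → Ln → Prop)
    (hpt : ∀ p q : Pt, p ≠ q → ∃! l : Ln, I p l ∧ I q l)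
    (hl : ∀ l : Ln, Nat.card {p : Pt // I p l} = 7)
    (hp : ∀ p : Pt, Nat.card {l : Ln // I p l} = 7) (p : Pt) :
    Finite Pt ∧ Nat.card Pt = 43 := by
  classical
  have fl : ∀ l : Ln, Finite {p : Pt // I p l} :=
    fun l => Nat.finite_of_card_ne_zero (by rw [hl]; norm_num)
  have fp : Finite {l : Ln // I p l} := Nat.finite_of_card_ne_zero (by rw [hp]; norm_num)
  have fs : ∀ l : {l : Ln // I p l}, Finite {r : {q : Pt // I q l.1} // r ≠ ⟨p, l.2⟩} :=
    fun l => inferInstance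
  have hc : ∀ l : {l : Ln // I p l}, Nat.card {r : {q : Pt // I q l.1} // r ≠ ⟨p, l.2⟩} = 6 := by
    intro l
    have := Fintype.ofFinite {q : Pt // I q l.1}
    have h7 := hl l.1
    rw [Nat.card_eq_fintype_card] at h7 ⊢
    rw [Fintype.card_subtype_compl, h7]
    simp
  let f : (Σ l : {l : Ln // I p l}, {r : {q : Pt // I q l.1} // r ≠ ⟨p, l.2⟩}) →
      {q : Pt // q ≠ p} := fun s => ⟨s.2.1.1, fun h => s.2.2 (Subtype.ext h)⟩
  have hf : Function.Bijective f := by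
    constructor
    · rintro ⟨⟨l, hpl⟩, ⟨⟨q, hql⟩, hq⟩⟩ ⟨⟨m, hpm⟩, ⟨⟨q', hqm⟩, hq'⟩⟩ h
      obtain rfl : q = q' := congrArg Subtype.val h
      have hne : p ≠ q := fun h => hq (Subtype.ext h.symm)
      obtain rfl : l = m := (hpt p q hne).unique ⟨hpl, hql⟩ ⟨hpm, hqm⟩
      rfl
    · rintro ⟨q, hq⟩
      obtain ⟨l, ⟨h1, h2⟩, -⟩ := hpt p q (Ne.symm hq)
      exact ⟨⟨⟨l, h1⟩, ⟨⟨q, h2⟩, fun h => hq (congrArg Subtype.val h)⟩⟩, rfl⟩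
  have hfin : Finite {q : Pt // q ≠ p} := Finite.of_surjective f hf.2
  have hcard : Nat.card {q : Pt // q ≠ p} = 42 := by
    have := Fintype.ofFinite {l : Ln // I p l}
    rw [← Nat.card_congr (Equiv.ofBijective f hf), Nat.card_sigma, Finset.sum_congr rfl
      (fun l _ => hc l), Finset.sum_const, Finset.card_univ, ← Nat.card_eq_fintype_card, hp]
    rfl
  have e : Option {q : Pt // q ≠ p} ≃ Pt := Equiv.optionSubtypeNe p
  refine ⟨Finite.of_equiv _ e, ?_⟩
  rw [← Nat.card_congr e, Finite.card_option, hcard]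

/-- The incidence matrix `A` of the plane satisfies `A Aᵀ = 6 + J`, with `J` the all-ones matrix:
here in the form of an identity of quadratic forms. -/
lemma sum_lineForm_sq {Pt Ln : Type} [Fintype Pt] [Fintype Ln] (I : Pt → Ln → Prop)
    [∀ p l, Decidable (I p l)]
    (hpt : ∀ p q : Pt, p ≠ q → ∃! l : Ln, I p l ∧ I q l)
    (hp : ∀ p : Pt, Nat.card {l : Ln // I p l} = 7) (x : Pt → ℚ) :
    ∑ l, (∑ p, if I p l then x p else 0) ^ 2 = 6 * ∑ p, x p ^ 2 + (∑ p, x p) ^ 2 := by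
  classical
  have hcount : ∀ p q : Pt, (∑ l, if I p l ∧ I q l then (1 : ℚ) else 0)
      = 1 + if p = q then 6 else 0 := by
    intro p q
    rw [Finset.sum_boole]
    by_cases h : p = q
    · subst h
      have := hp p
      rw [Nat.card_eq_fintype_card, Fintype.card_subtype] at this
      simp only [and_self, this, if_true]
      norm_num
    · obtain ⟨l, h1, h2⟩ := hpt p q h
      have : (Finset.univ.filter fun l => I p l ∧ I q l) = {l} := by
        ext m
        simp only [Finset.mem_filter, Finset.mem_univ, true_and, Finset.mem_singleton]
        exact ⟨fun hm => h2 m hm, fun hm => hm ▸ h1⟩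
      simp [this, h]
  calc ∑ l, (∑ p, if I p l then x p else 0) ^ 2
      = ∑ l, ∑ p, ∑ q, x p * x q * (if I p l ∧ I q l then (1 : ℚ) else 0) := by
        refine Finset.sum_congr rfl fun l _ => ?_
        rw [sq, Finset.sum_mul_sum]
        refine Finset.sum_congr rfl fun p _ => Finset.sum_congr rfl fun q _ => ?_
        by_cases h1 : I p l <;> by_cases h2 : I q l <;> simp [h1, h2]
    _ = ∑ p, ∑ q, x p * x q * (1 + if p = q then 6 else 0) := by
        rw [Finset.sum_comm]
        refine Finset.sum_congr rfl fun p _ => ?_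
        rw [Finset.sum_comm]
        refine Finset.sum_congr rfl fun q _ => ?_
        rw [← Finset.mul_sum, hcount]
    _ = 6 * ∑ p, x p ^ 2 + (∑ p, x p) ^ 2 := by
        rw [sq (∑ p, x p), Finset.sum_mul_sum, Finset.mul_sum, ← Finset.sum_add_distrib]
        refine Finset.sum_congr rfl fun p _ => ?_
        simp only [mul_add, mul_one, Finset.sum_add_distrib, mul_ite, mul_zero,
          Finset.sum_ite_eq, Finset.mem_univ, if_true]
        ring


/-- There is no projective plane of order 6: there is no incidence structure in
which two points lie on a unique line, two lines meet in a unique point, every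
line has exactly 7 points, every point is on exactly 7 lines, and which
contains four points no three of which are collinear. -/
theorem no_projective_plane_order_six :
    ¬ ∃ (Pt Ln : Type) (I : Pt → Ln → Prop),
      (∀ p q : Pt, p ≠ q → ∃! l : Ln, I p l ∧ I q l) ∧
      (∀ l m : Ln, l ≠ m → ∃! p : Pt, I p l ∧ I p m) ∧
      (∀ l : Ln, Nat.card {p : Pt // I p l} = 7) ∧
      (∀ p : Pt, Nat.card {l : Ln // I p l} = 7) ∧
      (∃ a b c d : Pt, a ≠ b ∧ a ≠ c ∧ a ≠ d ∧ b ≠ c ∧ b ≠ d ∧ c ≠ d ∧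
        ∀ l : Ln, ¬(I a l ∧ I b l ∧ I c l) ∧ ¬(I a l ∧ I b l ∧ I d l) ∧
                  ¬(I a l ∧ I c l ∧ I d l) ∧ ¬(I b l ∧ I c l ∧ I d l)) := by
  classical
  rintro ⟨Pt, Ln, I, hpt, hln, hl, hp, ⟨a, b, -, -, hab, -⟩⟩
  obtain ⟨l₀, -, -⟩ := hpt a b hab
  obtain ⟨fP, cP⟩ := card_points_eq I hpt hl hp a
  obtain ⟨fL, cL⟩ := card_points_eq (fun l p => I p l) hln hp hl l₀
  have := Fintype.ofFinite Pt
  have := Fintype.ofFinite Ln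
  rw [Nat.card_eq_fintype_card] at cP cL
  -- `none` stands for the extra variable and for the form left unmatched.
  have eP : Option Pt ≃ Fin 11 × Fin 4 := Fintype.equivOfCardEq (by simp [cP])
  have eL : Option Ln ≃ Fin 11 × Fin 4 := Fintype.equivOfCardEq (by simp [cL])
  let L : Option Ln → (Fin 11 × Fin 4 → ℚ) →ₗ[ℚ] ℚ := fun o =>
    o.elim 0 fun l => ∑ p, if I p l then LinearMap.proj (eP (some p)) else 0
  obtain ⟨W, hdim, hsq, hinj⟩ := exists_submodule_sq_eq (fun i => eulerForm (eL i)) L (by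
    intro v hv
    have hz : ∑ s, v s ^ 2 = 0 := by
      have h6 := sum_eulerForm_sq v
      rw [← Equiv.sum_comp eL (fun s => eulerForm s v ^ 2)] at h6
      simp only [hv] at h6
      simp at h6
      linarith
    ext s
    have := (Finset.sum_eq_zero_iff_of_nonneg (fun s _ => sq_nonneg (v s))).1 hz s
      (Finset.mem_univ s)
    simpa using this) (Finset.univ.erase none)
  have hpos : 0 < Module.finrank ℚ W := by
    have hS : (Finset.univ.erase (none : Option Ln)).card = 43 := by
      simp [Finset.card_erase_of_mem, cL]
    rw [hS, Module.finrank_fintype_fun_eq_card] at hdim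
    simp only [Fintype.card_prod, Fintype.card_fin] at hdim
    omega
  have := Module.finrank_pos_iff.1 hpos
  obtain ⟨⟨v, hvW⟩, hv0⟩ := exists_ne (0 : W)
  have hy0 : eulerForm (eL none) v ≠ 0 := by
    intro h
    refine hv0 (Subtype.ext (hinj v hvW ?_))
    intro i hi
    have : i = none := by simpa using hi
    rw [this]
    exact h
  have h1 := sum_eulerForm_sq v
  rw [← Equiv.sum_comp eL (fun s => eulerForm s v ^ 2), ← Equiv.sum_comp eP (fun s => v s ^ 2),
    Fintype.sum_option, Fintype.sum_option] at h1
  have h2 := sum_lineForm_sq I hpt hp (fun p => v (eP (some p)))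
  have h3 : ∑ l, (∑ p, if I p l then v (eP (some p)) else 0) ^ 2
      = ∑ l, eulerForm (eL (some l)) v ^ 2 := by
    refine Finset.sum_congr rfl fun l _ => ?_
    rw [← hsq v hvW (some l) (by simp)]
    congr 1
    simp only [L, Option.elim, LinearMap.sum_apply]
    refine Finset.sum_congr rfl fun p _ => ?_
    split_ifs <;> simp
  exact hy0 (eq_zero_of_sq_add_sq_eq_six_mul_sq _ (∑ p, v (eP (some p))) (v (eP none))
    (by linarith))
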